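/- (Theorem 7, constructive POV with multiple candidates) Assume Δ_C ≥ 1. Let k ∈ ℕ, β a real with β > Δ_C, and α = Δ_C/β. Suppose S_β ⊆ V with |S_β| ≤ k satisfies Σ_{y ⊆ E} w(y)·min(β, f(S_β, y, A)) ≥ (1 − 1/e) · Σ_{y ⊆ E} w(y)·min(β, f(S', y, A)) for every S' ⊆ V with |S'| ≤ k (as the greedy step of POVConstructive guarantees). Then Σ_{y : m_C(S_β, y) ≥ Δ_C} w(y) ≥ (((e − 1)/(3e − 1))·OPT_C(β) − α)/(1 − α), where OPT_C(t) = max over S' ⊆ V with |S'| ≤ k of Σ_{y : m_C(S', y) ≥ t} w(y). In particular, the output of POVConstructive (the best S_β over all β) achieves POV_C at least max_{0 < α < 1} (((e − 1)/(3e − 1))·OPT_C(Δ_C/α) − α)/(1 − α). -/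

import Mathlib

/-!
Write `f` for the number of reached voters whose second choice is `c*`. The margin change is
squeezed between `f` and `2 f`: every term of the minimum is nonnegative (`reachCount_le_mC`), and
the term of a candidate with the most first choices is at most `f` (`mC_le_two_mul`).

By the upper bound, `m_C(S', y) ≥ β` forces `min β f ≥ β / 2`, so the surrogate value of an optimal
seed set is at least `(β / 2) · OPT_C(β)`, and that of `S_β` at least
`(1 - 1/e) (β / 2) · OPT_C(β)`. By the lower bound, `min β f ≤ Δ_C` outside the event
`m_C ≥ Δ_C`, so, the weights summing to one, the surrogate value of `S_β` is at most
`Δ_C + (β - Δ_C) · P(m_C ≥ Δ_C)`. Comparing the two gives the bound with the constant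
`(e - 1) / (2 e)`, which is at least `(e - 1) / (3 e - 1)`.
-/

open Finset

attribute [local instance] Classical.propDecidable

/-- Number of nodes of `A` reachable from seed set `S` in scenario `y`. -/
noncomputable def reachCount {V : Type*} (y : Finset (V × V)) (S A : Finset V) : ℕ :=
  (A.filter (fun v => ∃ s ∈ S, Relation.ReflTransGen (fun a b => (a, b) ∈ y) s v)).card

/-- Probability of the live-graph scenario `y ⊆ E` under edge probabilities `p`. -/
noncomputable def sceneWeight {V : Type*} (E : Finset (V × V)) (p : V × V → ℝ)
    (y : Finset (V × V)) : ℝ :=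
  (∏ e ∈ y, p e) * (∏ e ∈ E \ y, (1 - p e))

/-- Voters whose second choice is `c`. -/
noncomputable def secondFor {V C : Type*} [Fintype V] (π₂ : V → C) (c : C) : Finset V :=
  Finset.univ.filter (fun v => π₂ v = c)

/-- Voters whose first choice is `c`. -/
noncomputable def firstFor {V C : Type*} [Fintype V] (π₁ : V → C) (c : C) : Finset V :=
  Finset.univ.filter (fun v => π₁ v = c)

/-- Constructive change in margin in scenario `y` under seed set `S`:
`m_C(S, y) = f(S, y, A) + min_{c ∈ J} ( f(S, y, A ∩ B_c) + max_{c' ∈ J} |B_{c'}| − |B_c| )`,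
where `A = {v : π₂ v = c*}` and `B_c = {v : π₁ v = c}`. -/
noncomputable def mC {V C : Type*} [Fintype V] (J : Finset C) (hJ : J.Nonempty)
    (π₁ π₂ : V → C) (cstar : C) (S : Finset V) (y : Finset (V × V)) : ℝ :=
  (reachCount y S (secondFor π₂ cstar) : ℝ) +
    J.inf' hJ (fun c =>
      (reachCount y S (secondFor π₂ cstar ∩ firstFor π₁ c) : ℝ) +
        J.sup' hJ (fun c' => ((firstFor π₁ c').card : ℝ)) - ((firstFor π₁ c).card : ℝ))

/-- `OPT_C(t)`: the maximum, over seed sets `S'` of size at most `k`, of the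
probability that the constructive change in margin is at least `t`. -/
noncomputable def OPTC {V C : Type*} [Fintype V] (E : Finset (V × V)) (p : V × V → ℝ)
    (J : Finset C) (hJ : J.Nonempty) (π₁ π₂ : V → C) (cstar : C) (k : ℕ) (t : ℝ) : ℝ :=
  (Finset.univ.powerset.filter (fun S : Finset V => S.card ≤ k)).sup' ⟨∅, by simp⟩
    (fun S => ∑ y ∈ E.powerset.filter (fun y => t ≤ mC J hJ π₁ π₂ cstar S y),
      sceneWeight E p y)

lemma sceneWeight_nonneg {V : Type*} {E : Finset (V × V)} {p : V × V → ℝ}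
    (hp : ∀ e ∈ E, 0 ≤ p e ∧ p e ≤ 1) {y : Finset (V × V)} (hy : y ∈ E.powerset) :
    0 ≤ sceneWeight E p y := by
  have hy' := mem_powerset.1 hy
  refine mul_nonneg (prod_nonneg fun e he => (hp e (hy' he)).1) (prod_nonneg fun e he => ?_)
  have := (hp e (mem_sdiff.1 he).1).2
  linarith

lemma sum_sceneWeight {V : Type*} (E : Finset (V × V)) (p : V × V → ℝ) :
    ∑ y ∈ E.powerset, sceneWeight E p y = 1 := by
  have h := Finset.prod_add p (fun e => 1 - p e) E
  simp only [add_sub_cancel, prod_const_one] at h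
  rw [h]
  exact sum_congr rfl fun y _ => by unfold sceneWeight; congr!

lemma reachCount_mono {V : Type*} (y : Finset (V × V)) (S : Finset V) {A B : Finset V}
    (h : A ⊆ B) : reachCount y S A ≤ reachCount y S B :=
  card_le_card (filter_subset_filter _ h)

lemma reachCount_le_mC {V C : Type*} [Fintype V] (J : Finset C) (hJ : J.Nonempty)
    (π₁ π₂ : V → C) (cstar : C) (S : Finset V) (y : Finset (V × V)) :
    (reachCount y S (secondFor π₂ cstar) : ℝ) ≤ mC J hJ π₁ π₂ cstar S y := by
  unfold mC
  refine le_add_of_nonneg_right (le_inf' _ _ fun c hc => ?_)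
  have h1 := le_sup' (fun c' => ((firstFor π₁ c').card : ℝ)) hc
  have h2 : (0 : ℝ) ≤ reachCount y S (secondFor π₂ cstar ∩ firstFor π₁ c) := Nat.cast_nonneg _
  linarith

lemma mC_le_two_mul {V C : Type*} [Fintype V] (J : Finset C) (hJ : J.Nonempty)
    (π₁ π₂ : V → C) (cstar : C) (S : Finset V) (y : Finset (V × V)) :
    mC J hJ π₁ π₂ cstar S y ≤ 2 * (reachCount y S (secondFor π₂ cstar) : ℝ) := by
  obtain ⟨c, hc, hmax⟩ := exists_mem_eq_sup' hJ (fun c' => ((firstFor π₁ c').card : ℝ))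
  have h1 := inf'_le (fun c =>
      (reachCount y S (secondFor π₂ cstar ∩ firstFor π₁ c) : ℝ) +
        J.sup' hJ (fun c' => ((firstFor π₁ c').card : ℝ)) - ((firstFor π₁ c).card : ℝ)) hc
  have h2 : (reachCount y S (secondFor π₂ cstar ∩ firstFor π₁ c) : ℝ) ≤
      reachCount y S (secondFor π₂ cstar) :=
    Nat.cast_le.2 (reachCount_mono y S inter_subset_left)
  unfold mC
  linarith

/-- Theorem 7, constructive POV with multiple candidates: with
`Δ_C = max_{c ∈ J} |B_c| − |{v : π₁ v = c*}| + 1 ≥ 1`, `β > Δ_C`, `α = Δ_C/β`, if `S_β`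
(of size at most `k`) is a `(1 − 1/e)`-approximate maximizer of the truncated surrogate
`Σ_y w(y)·min(β, f(S, y, A))` with `A = {v : π₂ v = c*}`, then the probability that the
constructive change in margin reaches `Δ_C` is at least
`(((e − 1)/(3e − 1))·OPT_C(β) − α)/(1 − α)`. -/
theorem povC_multicandidate_bicriteria {V C : Type*} [Fintype V]
    (E : Finset (V × V)) (p : V × V → ℝ) (hp : ∀ e ∈ E, 0 ≤ p e ∧ p e ≤ 1)
    (J : Finset C) (hJ : J.Nonempty) (π₁ π₂ : V → C) (cstar : C)
    (hdist : ∀ v, π₁ v ≠ π₂ v) (k : ℕ) (ΔC β α : ℝ)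
    (hΔdef : ΔC = J.sup' hJ (fun c => ((firstFor π₁ c).card : ℝ)) -
      ((firstFor π₁ cstar).card : ℝ) + 1)
    (hΔ : 1 ≤ ΔC) (hβ : ΔC < β) (hα : α = ΔC / β)
    (Sβ : Finset V) (hSβ : Sβ.card ≤ k)
    (hgreedy : ∀ S' : Finset V, S'.card ≤ k →
      (1 - 1 / Real.exp 1) *
          ∑ y ∈ E.powerset, sceneWeight E p y * min β (reachCount y S' (secondFor π₂ cstar) : ℝ) ≤
        ∑ y ∈ E.powerset, sceneWeight E p y * min β (reachCount y Sβ (secondFor π₂ cstar) : ℝ)) :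
    ((Real.exp 1 - 1) / (3 * Real.exp 1 - 1) * OPTC E p J hJ π₁ π₂ cstar k β - α) / (1 - α) ≤
      ∑ y ∈ E.powerset.filter (fun y => ΔC ≤ mC J hJ π₁ π₂ cstar Sβ y),
        sceneWeight E p y := by
  have hβ0 : 0 < β := by linarith
  have hw := fun y (hy : y ∈ E.powerset) => sceneWeight_nonneg hp hy
  obtain ⟨S, hS, hopt⟩ := exists_mem_eq_sup' (s := Finset.univ.powerset.filter
    (fun S : Finset V => S.card ≤ k)) ⟨∅, by simp⟩
    (fun S => ∑ y ∈ E.powerset.filter (fun y => β ≤ mC J hJ π₁ π₂ cstar S y),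
      sceneWeight E p y)
  change OPTC E p J hJ π₁ π₂ cstar k β = _ at hopt
  set O := OPTC E p J hJ π₁ π₂ cstar k β with hO
  have hO0 : 0 ≤ O := by
    rw [hopt]
    exact sum_nonneg fun y hy => hw y (mem_filter.1 hy).1
  have hlow : β / 2 * O ≤ ∑ y ∈ E.powerset,
      sceneWeight E p y * min β (reachCount y S (secondFor π₂ cstar) : ℝ) := by
    rw [hopt, sum_filter, mul_sum]
    refine sum_le_sum fun y hy => ?_
    split_ifs with h
    · rw [mul_comm]
      refine mul_le_mul_of_nonneg_left (le_min (by linarith) ?_) (hw y hy)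
      linarith [mC_le_two_mul J hJ π₁ π₂ cstar S y]
    · rw [mul_zero]
      exact mul_nonneg (hw y hy) (le_min hβ0.le (Nat.cast_nonneg _))
  set P := ∑ y ∈ E.powerset.filter (fun y => ΔC ≤ mC J hJ π₁ π₂ cstar Sβ y),
    sceneWeight E p y with hP
  have hup : ∑ y ∈ E.powerset,
      sceneWeight E p y * min β (reachCount y Sβ (secondFor π₂ cstar) : ℝ) ≤
      ΔC + (β - ΔC) * P := by
    calc _ ≤ ∑ y ∈ E.powerset, (ΔC * sceneWeight E p y + (β - ΔC) *
            (if ΔC ≤ mC J hJ π₁ π₂ cstar Sβ y then sceneWeight E p y else 0)) := by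
          refine sum_le_sum fun y hy => ?_
          split_ifs with h
          · have := mul_le_mul_of_nonneg_left
              (min_le_left β (reachCount y Sβ (secondFor π₂ cstar) : ℝ)) (hw y hy)
            linarith
          · have := mul_le_mul_of_nonneg_left
              ((min_le_right β (reachCount y Sβ (secondFor π₂ cstar) : ℝ)).trans
                ((reachCount_le_mC J hJ π₁ π₂ cstar Sβ y).trans (not_le.1 h).le)) (hw y hy)
            linarith
      _ = ΔC + (β - ΔC) * P := by
          rw [sum_add_distrib, ← mul_sum, ← mul_sum, sum_sceneWeight, mul_one, hP, sum_filter]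
  have he : 1 < Real.exp 1 := Real.one_lt_exp_iff.2 one_pos
  have hc0 : 0 ≤ 1 - 1 / Real.exp 1 := by
    rw [sub_nonneg, div_le_one (by linarith)]
    exact he.le
  have hg := (mul_le_mul_of_nonneg_left hlow hc0).trans
    ((hgreedy S (mem_filter.1 hS).2).trans hup)
  have hconst : (Real.exp 1 - 1) / (3 * Real.exp 1 - 1) ≤ (1 - 1 / Real.exp 1) / 2 := by
    have : (1 - 1 / Real.exp 1) / 2 = (Real.exp 1 - 1) / (2 * Real.exp 1) := by
      field_simp
    rw [this]
    exact div_le_div_of_nonneg_left (by linarith) (by linarith) (by linarith)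
  have hαβ : α * β = ΔC := by rw [hα]; field_simp
  have hα1 : α < 1 := by rw [hα, div_lt_one hβ0]; exact hβ
  rw [div_le_iff₀ (by linarith)]
  have h1 := mul_le_mul_of_nonneg_right hconst hO0
  have h2 : β * ((1 - 1 / Real.exp 1) / 2 * O) ≤ β * (α + (1 - α) * P) := by
    rw [← hαβ] at hg
    linarith
  linarith [le_of_mul_le_mul_left h2 hβ0]
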